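/- In a finite partial Sherk plane in which some line is incident only with thick points, for every line ℓ and every point P not incident with ℓ, there exists a unique line m incident with P that does not intersect ℓ (i.e., the Bruck net parallel axiom N1 holds). -/

import Mathlib

/-!
Perpendicularity is a loopless graph on the lines, in which a line with `d` points has degree `d`
(`card_perps`). If `m` is not perpendicular to `l`, sending the points of `m` to perpendiculars of
`l` through them is injective, so `m` and `l` have equally many points and the map is onto. Hence
every perpendicular of `l` meets `m` (`meets`), and all lines through a pole of `l` are
perpendicular to `l` (`IsPole_perp`). Without poles this gives the parallel axiom: with `h ⊥ l`
through `P` and `m ⊥ h` at `P`, the line `m` misses `l`, and every other line through `P` meets `l`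
(`parallel_of_no_poles`). It remains to exclude poles.

A line with only thick points forces all lines to have the same number `D` of points
(`card_pts_const`), then all points to be thick (`thick`), and finally all points to lie on the same
number `R ≥ 3` of lines (`card_lns_const`), because perpendicularity is a bijection between the
lines through two points neither of which is a pole of a line through the other. Disjoint lines have
the same perpendiculars (`twin_of_disjoint`), so parallelism is an equivalence relation. Two double
counts show that every point is a pole of the same number `q` of lines (`card_lines_add`), that
all parallel classes have the same size `c` (`card_twins_add`), and that `D = c + q * (R - 1)`. The
common perpendiculars of two lines meeting at `P` are the `q` polars of `P`.

So in the graph of parallel classes every vertex has degree `k = D / c` and two distinct vertices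
have `e = q / c` common neighbours, where `k = 1 + e * (R - 1)`. If a pole exists then `e ≥ 1`, and
such a graph is excluded by the trace argument known from the friendship theorem
(`no_regular_friendship`).
-/

structure PartialSherkPlane (Point Line : Type*) where
  Inc : Point → Line → Prop
  Perp : Line → Line → Prop
  aStar : ∀ P Q : Point, P ≠ Q → ∀ l m : Line,
    Inc P l → Inc Q l → Inc P m → Inc Q m → l = m
  b1 : ∀ l m : Line, Perp l m → Perp m l
  b2 : ∀ l m : Line, Perp l m → ∃ P : Point, Inc P l ∧ Inc P m
  b3 : ∀ (P : Point) (l : Line), ∃ m : Line, Inc P m ∧ Perp m l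
  b4 : ∀ (P : Point) (l : Line), Inc P l → ∃! m : Line, Inc P m ∧ Perp m l
  b5 : ∃ x y z : Line, Perp x y ∧ ¬ Perp x z ∧ ¬ Perp y z ∧
    ¬ ∃ P : Point, Inc P x ∧ Inc P y ∧ Inc P z

/-- `P` is a pole of `l`: `P` is not on `l` and at least two distinct
perpendiculars to `l` pass through `P`. -/
def PartialSherkPlane.IsPole {Point Line : Type*} (G : PartialSherkPlane Point Line)
    (P : Point) (l : Line) : Prop :=
  ¬ G.Inc P l ∧ ∃ g h : Line, g ≠ h ∧ G.Inc P g ∧ G.Inc P h ∧ G.Perp g l ∧ G.Perp h l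

namespace PartialSherkPlane

open Finset

/-! ### Incidence and perpendicularity -/

section Basic

variable {Point Line : Type*} (G : PartialSherkPlane Point Line)

lemma perp_unique {P : Point} {l m n : Line} (hl : G.Inc P l) (hm : G.Inc P m)
    (hn : G.Inc P n) (hml : G.Perp m l) (hnl : G.Perp n l) : m = n :=
  (G.b4 P l hl).unique ⟨hm, hml⟩ ⟨hn, hnl⟩

lemma exists_inc (m : Line) : ∃ P, G.Inc P m := by
  obtain ⟨x, y, z, hxy, -⟩ := G.b5
  obtain ⟨P, -, -⟩ := G.b2 x y hxy
  obtain ⟨n, -, hn⟩ := G.b3 P m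
  obtain ⟨Q, -, hQ⟩ := G.b2 n m hn
  exact ⟨Q, hQ⟩

/-- A self-perpendicular line would contain every point, which collapses the geometry to a single
line or a single point, against `b5`. -/
lemma perp_irrefl (l : Line) : ¬ G.Perp l l := by
  intro hl
  have h1 : ∀ m, G.Perp m l → m = l := by
    intro m hm
    obtain ⟨P, hPm, hPl⟩ := G.b2 m l hm
    exact G.perp_unique hPl hPm hPl hm hl
  have h2 : ∀ P, G.Inc P l := by
    intro P
    obtain ⟨m, hPm, hm⟩ := G.b3 P l
    rwa [h1 m hm] at hPm
  have h3 : ∀ m, m ≠ l → ∀ P Q, G.Inc P m → P = Q := by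
    intro m hm P Q hP
    by_contra hPQ
    have hQ : ¬ G.Inc Q m := fun hQ => hm (G.aStar P Q hPQ m l hP hQ (h2 P) (h2 Q))
    obtain ⟨n, hQn, hn⟩ := G.b3 Q m
    obtain ⟨R, hRn, hRm⟩ := G.b2 n m hn
    have hRQ : R ≠ Q := fun h => hQ (h ▸ hRm)
    have hnl : n = l := G.aStar R Q hRQ n l hRn hQn (h2 R) (h2 Q)
    exact hm (h1 m (G.b1 _ _ (hnl ▸ hn)))
  obtain ⟨x, y, z, hxy, hxz, hyz, hc⟩ := G.b5
  by_cases hall : ∀ m, m = l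
  · exact hxz (by rw [hall x, hall z]; exact hl)
  · push Not at hall
    obtain ⟨m, hm⟩ := hall
    obtain ⟨P, hP⟩ := G.exists_inc m
    have hP' : ∀ k, G.Inc P k := by
      intro k
      obtain ⟨Q, hQ⟩ := G.exists_inc k
      rwa [h3 m hm P Q hP]
    exact hc ⟨P, hP' x, hP' y, hP' z⟩

variable {G} in
lemma Perp_ne {l m : Line} (h : G.Perp l m) : l ≠ m := by
  rintro rfl
  exact G.perp_irrefl _ h

/-- If `m` is not perpendicular to `l`, distinct points of `m` lie on distinct perpendiculars
of `l`. -/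
lemma eq_of_perp {l m k : Line} (h : ¬ G.Perp m l) {P Q : Point} (hP : G.Inc P m)
    (hQ : G.Inc Q m) (hPk : G.Inc P k) (hQk : G.Inc Q k) (hk : G.Perp k l) : P = Q := by
  by_contra hPQ
  exact h (G.aStar P Q hPQ k m hPk hQk hP hQ ▸ hk)

/-- Two lines are twins if they have the same perpendiculars; for distinct lines this is
disjointness, see `eq_of_twin` and `twin_of_disjoint`. -/
def twin : Setoid Line where
  r l m := ∀ k, G.Perp k l ↔ G.Perp k m
  iseqv := ⟨fun _ _ => Iff.rfl, fun h k => (h k).symm, fun h h' k => (h k).trans (h' k)⟩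

lemma eq_of_twin {l m : Line} (h : G.twin l m) {P : Point} (hl : G.Inc P l) (hm : G.Inc P m) :
    l = m := by
  obtain ⟨n, ⟨hPn, hn⟩, -⟩ := G.b4 P l hl
  exact G.perp_unique hPn hl hm (G.b1 _ _ hn) (G.b1 _ _ ((h n).1 hn))

end Basic

/-! ### Poles, parallelism and regularity -/

section Counting

set_option linter.unusedSectionVars false

variable {Point Line : Type*} [Fintype Point] [Fintype Line] (G : PartialSherkPlane Point Line)

open scoped Classical in
/-- The points of `l`. -/
noncomputable def pts (l : Line) : Finset Point := univ.filter (fun P => G.Inc P l)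

open scoped Classical in
/-- The perpendiculars of `l`. -/
noncomputable def perps (l : Line) : Finset Line := univ.filter (fun m => G.Perp m l)

open scoped Classical in
/-- The lines through `P`. -/
noncomputable def lns (P : Point) : Finset Line := univ.filter (fun m => G.Inc P m)

open scoped Classical in
/-- The lines that have `P` as a pole. -/
noncomputable def polars (P : Point) : Finset Line := univ.filter (fun m => G.IsPole P m)

open scoped Classical in
/-- The parallel class of `l`. -/
noncomputable def twins (l : Line) : Finset Line := univ.filter (fun m => G.twin m l)

@[simp] lemma mem_pts {P : Point} {l : Line} : P ∈ G.pts l ↔ G.Inc P l := by simp [pts]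
@[simp] lemma mem_perps {m l : Line} : m ∈ G.perps l ↔ G.Perp m l := by simp [perps]
@[simp] lemma mem_lns {P : Point} {l : Line} : l ∈ G.lns P ↔ G.Inc P l := by simp [lns]
@[simp] lemma mem_polars {P : Point} {l : Line} : l ∈ G.polars P ↔ G.IsPole P l := by
  simp [polars]
@[simp] lemma mem_twins {m l : Line} : m ∈ G.twins l ↔ G.twin m l := by simp [twins]

/-- The perpendiculars of `l` correspond to their feet on `l`. -/
lemma card_perps (l : Line) : #(G.perps l) = #(G.pts l) := by
  choose f hf using fun (P : Point) (h : G.Inc P l) => (G.b4 P l h).exists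
  symm
  refine Finset.card_bij (fun P hP => f P (G.mem_pts.1 hP)) ?_ ?_ ?_
  · intro P hP
    exact G.mem_perps.2 (hf P _).2
  · intro P hP Q hQ h
    by_contra hPQ
    rw [mem_pts] at hP hQ
    have h1 := hf P hP
    have h2 := hf Q hQ
    rw [← h] at h2
    exact Perp_ne h1.2 (G.aStar P Q hPQ _ _ h1.1 h2.1 hP hQ)
  · intro m hm
    rw [mem_perps] at hm
    obtain ⟨P, hPm, hPl⟩ := G.b2 m l hm
    exact ⟨P, G.mem_pts.2 hPl, G.perp_unique hPl (hf P hPl).1 hPm (hf P hPl).2 hm⟩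

lemma card_pts_le {l m : Line} (h : ¬ G.Perp m l) : #(G.pts m) ≤ #(G.pts l) := by
  choose f hf using fun P => G.b3 P l
  rw [← G.card_perps l]
  refine Finset.card_le_card_of_injOn f (fun P _ => by simpa using (hf P).2) ?_
  intro P hP Q hQ hPQ
  simp only [SetLike.mem_coe, mem_pts] at hP hQ
  exact G.eq_of_perp h hP hQ (hf P).1 (hPQ ▸ (hf Q).1) (hf P).2

lemma card_pts_eq {l m : Line} (h : ¬ G.Perp m l) : #(G.pts m) = #(G.pts l) :=
  le_antisymm (G.card_pts_le h) (G.card_pts_le fun h' => h (G.b1 _ _ h'))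

/-- If `m` is not perpendicular to `l`, any choice of perpendiculars to `l` through the points
of `m` exhausts the perpendiculars of `l`, since it is injective and the two lines have equally
many points. -/
lemma exists_eq {l m k : Line} (h : ¬ G.Perp m l) (hk : G.Perp k l) (f : Point → Line)
    (hf : ∀ P, G.Inc P (f P) ∧ G.Perp (f P) l) : ∃ P, G.Inc P m ∧ f P = k := by
  have h1 : Set.SurjOn f (G.pts m) (G.perps l) := by
    refine Finset.surjOn_of_injOn_of_card_le f (fun P _ => by simpa using (hf P).2) ?_ ?_
    · intro P hP Q hQ hPQ
      simp only [SetLike.mem_coe, mem_pts] at hP hQ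
      exact G.eq_of_perp h hP hQ (hf P).1 (hPQ ▸ (hf Q).1) (hf P).2
    · rw [G.card_perps, G.card_pts_eq h]
  obtain ⟨P, hP, hPk⟩ := h1 (by simpa using hk : k ∈ (G.perps l : Set Line))
  exact ⟨P, by simpa using hP, hPk⟩

/-- Every perpendicular of `l` meets every line that is not perpendicular to `l`. -/
lemma meets {l m k : Line} (h : ¬ G.Perp m l) (hk : G.Perp k l) :
    ∃ P, G.Inc P m ∧ G.Inc P k := by
  choose f hf using fun P => G.b3 P l
  obtain ⟨P, hP, rfl⟩ := G.exists_eq h hk f hf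
  exact ⟨P, hP, (hf P).1⟩

lemma perp_unique' {l m k k' : Line} (h : ¬ G.Perp m l) {P : Point} (hP : G.Inc P m)
    (hPk : G.Inc P k) (hPk' : G.Inc P k') (hk : G.Perp k l) (hk' : G.Perp k' l) : k = k' := by
  choose f hf using fun P => G.b3 P l
  obtain ⟨Q, hQ, hQk⟩ := G.exists_eq h hk f hf
  obtain ⟨R, hR, hRk⟩ := G.exists_eq h hk' f hf
  have h1 : P = Q := G.eq_of_perp h hP hQ hPk (hQk ▸ (hf Q).1) hk
  have h2 : P = R := G.eq_of_perp h hP hR hPk' (hRk ▸ (hf R).1) hk'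
  rw [← hQk, ← hRk, ← h1, ← h2]

/-- All lines through a pole of `l` are perpendicular to `l`. -/
lemma IsPole_perp {P : Point} {l m : Line} (h : G.IsPole P l) (hm : G.Inc P m) :
    G.Perp m l := by
  obtain ⟨-, g, k, hgk, hg, hk, hgl, hkl⟩ := h
  by_contra hml
  exact hgk (G.perp_unique' hml hm hg hk hgl hkl)

lemma twin_of_disjoint {l m : Line} (h : ¬ ∃ Q, G.Inc Q m ∧ G.Inc Q l) : G.twin l m := by
  have key : ∀ {l m : Line}, (¬ ∃ Q, G.Inc Q m ∧ G.Inc Q l) →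
      ∀ k, G.Perp k l → G.Perp k m := by
    intro l m h k hk
    by_contra hkm
    exact h (G.meets (fun h' => hkm (G.b1 _ _ h')) (G.b1 _ _ hk))
  refine fun k => ⟨key h k, key ?_ k⟩
  rintro ⟨Q, h1, h2⟩
  exact h ⟨Q, h2, h1⟩

/-- The parallel axiom in the absence of poles. The parallel to `l` through `P` is the perpendicular
at `P` of the perpendicular `h` from `P` to `l`. -/
theorem parallel_of_no_poles (hno : ∀ P l, ¬ G.IsPole P l) (l : Line) (P : Point)
    (hP : ¬ G.Inc P l) : ∃! m : Line, G.Inc P m ∧ ¬ ∃ Q : Point, G.Inc Q m ∧ G.Inc Q l := by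
  obtain ⟨h, hPh, hhl⟩ := G.b3 P l
  obtain ⟨m, ⟨hPm, hmh⟩, -⟩ := G.b4 P h hPh
  have hlm : l ≠ m := fun h => hP (h ▸ hPm)
  refine ⟨m, ⟨hPm, ?_⟩, ?_⟩
  · rintro ⟨Q, hQm, hQl⟩
    by_cases hQh : G.Inc Q h
    · exact hlm (G.perp_unique hQh hQl hQm (G.b1 _ _ hhl) hmh)
    · exact hno Q h ⟨hQh, l, m, hlm, hQl, hQm, G.b1 _ _ hhl, hmh⟩
  · rintro k ⟨hPk, hk⟩
    by_contra hkm
    have hkh : ¬ G.Perp k h := fun hkh => hkm (G.perp_unique hPh hPk hPm hkh hmh)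
    exact hk (G.meets hkh (G.b1 _ _ hhl))

/-- `P` lies on at least three lines, in the form of a line through `P` distinct from and not
perpendicular to a given line through `P`. -/
lemma exists_third {P : Point} (hP : 3 ≤ #(G.lns P)) {g : Line} (hg : G.Inc P g) :
    ∃ h, G.Inc P h ∧ h ≠ g ∧ ¬ G.Perp h g := by
  classical
  obtain ⟨g', ⟨hPg', hg'⟩, -⟩ := G.b4 P g hg
  have : ∃ h ∈ G.lns P, h ∉ ({g, g'} : Finset Line) := by
    apply Finset.exists_mem_notMem_of_card_lt_card
    have := Finset.card_le_two (a := g) (b := g')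
    omega
  obtain ⟨h, h1, h2⟩ := this
  rw [mem_lns] at h1
  simp only [mem_insert, mem_singleton, not_or] at h2
  exact ⟨h, h1, h2.1, fun h3 => h2.2 (G.perp_unique hg h1 hPg' h3 hg')⟩

lemma two_le_lns (P : Point) : 2 ≤ #(G.lns P) := by
  classical
  obtain ⟨l, -⟩ := G.b5
  obtain ⟨g, hPg, -⟩ := G.b3 P l
  obtain ⟨g', ⟨hPg', hg'⟩, -⟩ := G.b4 P g hPg
  rw [← Finset.card_pair (Perp_ne hg')]
  refine Finset.card_le_card fun x hx => ?_
  simp only [mem_insert, mem_singleton] at hx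
  rcases hx with rfl | rfl <;> simpa

/-- All lines have the size of a line with thick points: a line not perpendicular to it by
`card_pts_eq`, a perpendicular by comparison with a third line through the foot. -/
lemma card_pts_const {L : Line} (hL : ∀ P, G.Inc P L → 3 ≤ #(G.lns P)) (m : Line) :
    #(G.pts m) = #(G.pts L) := by
  by_cases hm : G.Perp m L
  · obtain ⟨A, hAm, hAL⟩ := G.b2 m L hm
    obtain ⟨h, hAh, hhm, hh⟩ := G.exists_third (hL A hAL) hAm
    have hhL : ¬ G.Perp h L := fun hhL => hhm (G.perp_unique hAL hAh hAm hhL hm)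
    rw [← G.card_pts_eq hhL, G.card_pts_eq hh]
  · exact G.card_pts_eq hm

/-- The relation that some line through `Q` is polar to `P` is symmetric in `P` and `Q`. -/
lemma pole_symm {P Q : Point} {g : Line} (hPg : G.Inc P g) (h : G.IsPole Q g) :
    ∃ l, G.Inc Q l ∧ G.IsPole P l := by
  obtain ⟨g', ⟨hPg', hg'⟩, -⟩ := G.b4 P g hPg
  obtain ⟨l, hQl, hl⟩ := G.b3 Q g'
  have hlg := G.IsPole_perp h hQl
  refine ⟨l, hQl, fun hPl => ?_, g, g', (Perp_ne hg').symm, hPg, hPg', G.b1 _ _ hlg, G.b1 _ _ hl⟩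
  have := G.perp_unique hPg hPl hPg' hlg hg'
  exact Perp_ne hl this

/-- If no line through `Q` is polar to `P`, perpendicularity is a bijection between the lines
through `P` and those through `Q`. -/
lemma card_lns_eq {P Q : Point} (h : ∀ l, G.Inc Q l → ¬ G.IsPole P l) :
    #(G.lns P) = #(G.lns Q) := by
  have key : ∀ {P Q : Point}, (∀ l, G.Inc Q l → ¬ G.IsPole P l) → #(G.lns Q) ≤ #(G.lns P) := by
    intro P Q h
    choose f hf using fun l => G.b3 P l
    refine Finset.card_le_card_of_injOn f (fun l _ => by simpa using (hf l).1) ?_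
    intro l hl m hm hlm
    simp only [SetLike.mem_coe, mem_lns] at hl hm
    by_contra hne
    have h1 : G.Perp l (f l) := G.b1 _ _ (hf l).2
    have h2 : G.Perp m (f l) := hlm ▸ G.b1 _ _ (hf m).2
    by_cases hQ : G.Inc Q (f l)
    · exact hne (G.perp_unique hQ hl hm h1 h2)
    · obtain ⟨k, hk, hk'⟩ := G.pole_symm (hf l).1 ⟨hQ, l, m, hne, hl, hm, h1, h2⟩
      exact h k hk hk'
  refine le_antisymm (key fun l hl hl' => ?_) (key h)
  obtain ⟨k, hk, hk'⟩ := G.pole_symm hl hl'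
  exact h k hk hk'

/-- A thin point `W` is a pole of every line `L` with only thick points. Otherwise each point of `L`
would lie on its own polar of `W`, while `W` has fewer polars than a line through `W` has
perpendiculars. -/
lemma IsPole_of_thin {L : Line} (hL : ∀ P, G.Inc P L → 3 ≤ #(G.lns P)) {W : Point}
    (hW : #(G.lns W) < 3) : G.IsPole W L := by
  classical
  by_contra hWL
  have h1 : ∀ P, G.Inc P L → ∃ l, G.Inc P l ∧ G.IsPole W l := by
    intro P hP
    by_contra! hno
    have := G.card_lns_eq hno
    have := hL P hP
    omega
  choose f hf using h1
  have h2 : #(G.pts L) ≤ #(G.polars W) := by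
    refine Finset.card_le_card_of_injOn (fun P => if h : G.Inc P L then f P h else L) ?_ ?_
    · intro P hP
      simp only [SetLike.mem_coe, mem_pts] at hP
      simpa [hP] using (hf P hP).2
    · intro P hP Q hQ hPQ
      simp only [SetLike.mem_coe, mem_pts] at hP hQ
      simp only [hP, hQ, dite_true] at hPQ
      by_contra hne
      have := G.aStar P Q hne (f P hP) L (hf P hP).1 (hPQ ▸ (hf Q hQ).1) hP hQ
      exact hWL (this ▸ (hf P hP).2)
  obtain ⟨g, hWg, -⟩ := G.b3 W L
  obtain ⟨g', ⟨hWg', hg'⟩, -⟩ := G.b4 W g hWg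
  have h3 : #(G.polars W) < #(G.perps g) := by
    refine Finset.card_lt_card (Finset.ssubset_iff_of_subset ?_ |>.2 ⟨g', by simpa, ?_⟩)
    · intro l hl
      rw [mem_polars] at hl
      rw [mem_perps]
      exact G.b1 _ _ (G.IsPole_perp hl hWg)
    · rw [mem_polars]
      exact fun h => h.1 hWg'
  rw [G.card_perps, G.card_pts_const hL g] at h3
  omega

/-- A single line with only thick points makes every point thick. -/
lemma thick {L : Line} (hL : ∀ P, G.Inc P L → 3 ≤ #(G.lns P)) (W : Point) :
    3 ≤ #(G.lns W) := by
  by_contra! hW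
  have hWL := G.IsPole_of_thin hL hW
  obtain ⟨g, hWg, hgL⟩ := G.b3 W L
  obtain ⟨A, hAg, hAL⟩ := G.b2 g L hgL
  obtain ⟨k, hAk, hkL, hk⟩ := G.exists_third (hL A hAL) hAL
  -- a thin point is a pole of `L`, so it cannot lie on `k`
  have hthick : ∀ P, G.Inc P k → 3 ≤ #(G.lns P) := by
    intro P hP
    by_contra! hP'
    exact hk (G.IsPole_perp (G.IsPole_of_thin hL hP') hP)
  have hgk := G.IsPole_perp (G.IsPole_of_thin hthick hW) hWg
  exact hkL (G.perp_unique hAg hAk hAL (G.b1 _ _ hgk) (G.b1 _ _ hgL))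

/-- Two collinear points lie on equally many lines: they are non-conjugate, or a third point of
their line is conjugate to neither of them. -/
lemma card_lns_collinear (hth : ∀ P, 3 ≤ #(G.lns P)) {P Q : Point} {l : Line}
    (hP : G.Inc P l) (hQ : G.Inc Q l) : #(G.lns P) = #(G.lns Q) := by
  by_cases hPQ : P = Q
  · rw [hPQ]
  by_cases hno : ∀ m, G.Inc Q m → ¬ G.IsPole P m
  · exact G.card_lns_eq hno
  push Not at hno
  obtain ⟨m, hQm, hm⟩ := hno
  have hlm := G.IsPole_perp hm hP
  obtain ⟨n, ⟨hPn, hnl⟩, -⟩ := G.b4 P l hP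
  have hnm := G.IsPole_perp hm hPn
  obtain ⟨W, hWn, hWm⟩ := G.b2 n m hnm
  have hWl : G.IsPole W l := by
    refine ⟨fun hWl => ?_, n, m, Perp_ne hnm, hWn, hWm, hnl, G.b1 _ _ hlm⟩
    have h1 : W = Q := by
      by_contra h
      exact Perp_ne hlm (G.aStar W Q h l m hWl hQ hWm hQm)
    have h2 : W = P := by
      by_contra h
      exact Perp_ne hnl (G.aStar W P h n l hWn hPn hWl hP)
    exact hPQ (h2.symm.trans h1)
  obtain ⟨h, hWh, hhn, hh⟩ := G.exists_third (hth W) hWn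
  obtain ⟨C, hCh, hCl⟩ := G.b2 h l (G.IsPole_perp hWl hWh)
  -- the foot `C` of a third line through `W` is conjugate to neither `P` nor `Q`
  have e1 : #(G.lns C) = #(G.lns P) := by
    refine G.card_lns_eq fun k hPk hk => ?_
    have hkn : k = n := G.perp_unique hP hPk hPn (G.b1 _ _ (G.IsPole_perp hk hCl)) hnl
    exact hh (hkn ▸ G.IsPole_perp hk hCh)
  have e2 : #(G.lns C) = #(G.lns Q) := by
    refine G.card_lns_eq fun k hQk hk => ?_
    have hkm : k = m :=
      G.perp_unique hQ hQk hQm (G.b1 _ _ (G.IsPole_perp hk hCl)) (G.b1 _ _ hlm)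
    have hhm : G.Perp h m := hkm ▸ G.IsPole_perp hk hCh
    exact hhn (G.perp_unique hWm hWh hWn hhm hnm)
  rw [← e1, e2]

lemma card_lns_const (hth : ∀ P, 3 ≤ #(G.lns P)) (P Q : Point) :
    #(G.lns P) = #(G.lns Q) := by
  obtain ⟨x, -⟩ := G.b5
  obtain ⟨g, hPg, -⟩ := G.b3 P x
  obtain ⟨l, hQl, -⟩ := G.b3 Q x
  have key : ∀ m, G.Inc Q m → (∃ R, G.Inc R m ∧ G.Inc R g) → #(G.lns P) = #(G.lns Q) := by
    rintro m hQm ⟨R, hRm, hRg⟩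
    exact (G.card_lns_collinear hth hPg hRg).trans (G.card_lns_collinear hth hRm hQm)
  obtain ⟨h, hQh, hhl, -⟩ := G.exists_third (hth Q) hQl
  by_contra hne
  have h1 := G.twin_of_disjoint (fun hm => hne (key l hQl hm))
  have h2 := G.twin_of_disjoint (fun hm => hne (key h hQh hm))
  exact hhl (G.eq_of_twin (G.twin.trans (G.twin.symm h2) h1) hQh hQl)

/-- Double count of the pairs consisting of a line `g` through `P` and a perpendicular `l` of `g`:
a line `l` has one perpendicular through `P`, or all of them when `P` is a pole of `l`. -/
lemma card_lines_add {D R : ℕ} (hD : ∀ l, #(G.pts l) = D) (P : Point) (hR : #(G.lns P) = R)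
    (hR0 : 1 ≤ R) : Fintype.card Line + #(G.polars P) * (R - 1) = R * D := by
  classical
  have h := Finset.sum_card_bipartiteAbove_eq_sum_card_bipartiteBelow (s := G.lns P)
    (t := (univ : Finset Line)) (r := fun g l => G.Perp l g)
  have h1 : ∀ g ∈ G.lns P, #(bipartiteAbove (fun g l => G.Perp l g) univ g) = D := by
    intro g _
    rw [← hD g, ← G.card_perps]
    congr 1
  have h2 : ∀ l ∈ (univ : Finset Line), #(bipartiteBelow (fun g l => G.Perp l g) (G.lns P) l)
      = 1 + if G.IsPole P l then R - 1 else 0 := by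
    intro l _
    split_ifs with hl
    · rw [Nat.add_sub_cancel' hR0, ← hR]
      congr 1
      ext g
      simp only [mem_bipartiteBelow, mem_lns, and_iff_left_iff_imp]
      exact fun hg => G.b1 _ _ (G.IsPole_perp hl hg)
    · rw [add_zero, Finset.card_eq_one]
      obtain ⟨g, hPg, hg⟩ := G.b3 P l
      refine ⟨g, ?_⟩
      ext k
      simp only [mem_bipartiteBelow, mem_lns, mem_singleton]
      constructor
      · rintro ⟨hPk, hk⟩
        by_contra hne
        by_cases hPl : G.Inc P l
        · exact hne (G.perp_unique hPl hPk hPg (G.b1 _ _ hk) hg)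
        · exact hl ⟨hPl, k, g, hne, hPk, hPg, G.b1 _ _ hk, hg⟩
      · rintro rfl
        exact ⟨hPg, G.b1 _ _ hg⟩
  rw [Finset.sum_congr rfl h1, Finset.sum_congr rfl h2, Finset.sum_add_distrib,
    ← Finset.sum_filter] at h
  simp only [sum_const, smul_eq_mul, card_univ, mul_one, hR] at h
  rw [h, polars]

/-- Double count of the pairs consisting of a point of `l` and a line through it. -/
lemma card_twins_add {D R : ℕ} (hD : ∀ l, #(G.pts l) = D) (hR : ∀ P, #(G.lns P) = R) (l : Line) :
    D * R + #(G.twins l) = D + Fintype.card Line := by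
  classical
  have h := Finset.sum_card_bipartiteAbove_eq_sum_card_bipartiteBelow (s := G.pts l)
    (t := (univ : Finset Line)) (r := fun P m => G.Inc P m)
  have h1 : ∀ P ∈ G.pts l, #(bipartiteAbove (fun P m => G.Inc P m) univ P) = R := by
    intro P _
    rw [← hR P]
    congr 1
  have h2 : ∀ m ∈ (univ : Finset Line), #(bipartiteBelow (fun P m => G.Inc P m) (G.pts l) m)
      + (if G.twin m l then 1 else 0) = (if m = l then D else 0) + 1 := by
    intro m _
    by_cases hml : m = l
    · subst hml
      have : bipartiteBelow (fun P m => G.Inc P m) (G.pts m) m = G.pts m := by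
        ext; simp [bipartiteBelow]
      rw [this, hD, if_pos rfl, if_pos (G.twin.refl m)]
    · rw [if_neg hml, zero_add]
      split_ifs with ht
      · rw [Nat.add_eq_right, Finset.card_eq_zero, Finset.eq_empty_iff_forall_notMem]
        intro P hP
        simp only [mem_bipartiteBelow, mem_pts] at hP
        exact hml (G.eq_of_twin ht hP.2 hP.1)
      · rw [add_zero, Finset.card_eq_one]
        have : ∃ Q, G.Inc Q l ∧ G.Inc Q m := by
          by_contra hno
          exact ht (G.twin_of_disjoint hno)
        obtain ⟨Q, hQl, hQm⟩ := this
        refine ⟨Q, ?_⟩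
        ext P
        simp only [mem_bipartiteBelow, mem_pts, mem_singleton]
        constructor
        · rintro ⟨hPl, hPm⟩
          by_contra hne
          exact hml (G.aStar P Q hne m l hPm hQm hPl hQl)
        · rintro rfl
          exact ⟨hQl, hQm⟩
  have h3 := Finset.sum_congr (rfl : (univ : Finset Line) = univ) h2
  rw [Finset.sum_add_distrib, Finset.sum_add_distrib, ← h, Finset.sum_congr rfl h1] at h3
  rw [← Finset.card_filter] at h3
  simp only [sum_const, smul_eq_mul, card_univ, mul_one, sum_ite_eq', mem_univ, if_true, hD] at h3
  exact h3

/-- The common perpendiculars of two lines meeting at `P` are the lines with pole `P`. -/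
lemma common_perps {l m : Line} {P : Point} (hlm : l ≠ m) (hl : G.Inc P l) (hm : G.Inc P m)
    (k : Line) : (G.Perp k l ∧ G.Perp k m) ↔ G.IsPole P k := by
  constructor
  · rintro ⟨h1, h2⟩
    refine ⟨fun hk => hlm ?_, l, m, hlm, hl, hm, G.b1 _ _ h1, G.b1 _ _ h2⟩
    exact G.perp_unique hk hl hm (G.b1 _ _ h1) (G.b1 _ _ h2)
  · exact fun h => ⟨G.b1 _ _ (G.IsPole_perp h hl), G.b1 _ _ (G.IsPole_perp h hm)⟩

end Counting

/-! ### Graphs with constant numbers of common neighbours -/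

/-- There is no loopless graph, regular of degree `k`, in which any two vertices have `c ≥ 1`
common neighbours, with `k = 1 + c * t` and `t ≥ 2`; the friendship theorem for regular graphs is
the case `c = 1`. For a prime `p` dividing `k - c`, the square of the adjacency matrix is `c` times
the all-one matrix modulo `p`, so that its `p`-th power has trace `k ^ p`, while this trace is `0`
because the diagonal vanishes. -/
theorem no_regular_friendship {V : Type*} [Fintype V] [Nonempty V] (adj : V → V → Prop)
    (hsymm : ∀ v w, adj v w → adj w v) (hirr : ∀ v, ¬ adj v v) {k c t : ℕ}
    (hk : ∀ v, Nat.card {w // adj w v} = k)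
    (hc : ∀ v w, v ≠ w → Nat.card {u // adj u v ∧ adj u w} = c)
    (hkc : k = 1 + c * t) (ht : 2 ≤ t) (hc0 : 1 ≤ c) : False := by
  classical
  have hlt : c + 1 < k := by nlinarith
  obtain ⟨p, hp, hpd⟩ := Nat.exists_prime_and_dvd (n := k - c) (by omega)
  have := Fact.mk hp
  have hkcp : (k : ZMod p) = c := by
    have : ((k - c : ℕ) : ZMod p) = 0 := (ZMod.natCast_eq_zero_iff _ _).2 hpd
    rw [Nat.cast_sub (by omega)] at this
    exact sub_eq_zero.1 this
  let A : Matrix V V (ZMod p) := Matrix.of fun v w => if adj v w then 1 else 0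
  let J : Matrix V V (ZMod p) := Matrix.of fun _ _ => 1
  have hA2 : A * A = (c : ZMod p) • J := by
    ext v w
    have e : (A * A) v w = (Nat.card {u // adj u v ∧ adj u w} : ZMod p) := by
      rw [Matrix.mul_apply, Nat.card_eq_fintype_card, Fintype.card_subtype,
        Finset.card_filter, Nat.cast_sum]
      refine Finset.sum_congr rfl fun u _ => ?_
      have : adj v u ↔ adj u v := ⟨hsymm _ _, hsymm _ _⟩
      by_cases h1 : adj u v <;> by_cases h2 : adj u w <;> simp [A, this, h1, h2]
    rw [e]
    by_cases hvw : v = w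
    · subst hvw
      have : Nat.card {u // adj u v ∧ adj u v} = k := by simpa only [and_self] using hk v
      rw [this, hkcp]
      simp [J]
    · rw [hc v w hvw]
      simp [J]
  have hAJ : A * J = (k : ZMod p) • J := by
    ext v w
    rw [Matrix.mul_apply, Matrix.smul_apply, ← hk v, Nat.card_eq_fintype_card,
      Fintype.card_subtype, Finset.card_filter]
    have : ∀ u, adj v u ↔ adj u v := fun u => ⟨hsymm _ _, hsymm _ _⟩
    simp [A, J, this]
  have hpow : ∀ n, A ^ (n + 2) = ((k : ZMod p) ^ n * c) • J := by
    intro n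
    induction n with
    | zero => simp [pow_two, hA2]
    | succ n ih =>
      rw [show n + 1 + 2 = (n + 2) + 1 by ring, pow_succ', ih, Matrix.mul_smul, hAJ, smul_smul]
      congr 1
      ring
  have hcount : (k : ZMod p) * k = c * Fintype.card V := by
    obtain ⟨v⟩ := ‹Nonempty V›
    have h1 : A * A * J = ((k : ZMod p) * k) • J := by
      rw [Matrix.mul_assoc, hAJ, Matrix.mul_smul, hAJ, smul_smul]
    have h2 : J * J = (Fintype.card V : ZMod p) • J := by
      ext; simp [J, Matrix.mul_apply]
    rw [hA2, Matrix.smul_mul, h2, smul_smul] at h1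
    simpa [J] using (congrFun (congrFun h1 v) v).symm
  have htr : Matrix.trace (A ^ p) = 0 := by
    rw [ZMod.trace_pow_card]
    have : Matrix.trace A = 0 := by simp [Matrix.trace, A, hirr]
    rw [this, zero_pow hp.ne_zero]
  obtain ⟨n, rfl⟩ := Nat.exists_eq_add_of_le' hp.two_le
  have hk0 : (k : ZMod (n + 2)) = 0 := by
    rw [hpow, Matrix.trace_smul] at htr
    have hJ : Matrix.trace J = (Fintype.card V : ZMod (n + 2)) := by simp [Matrix.trace, J]
    rw [hJ, smul_eq_mul, mul_assoc, ← hcount, ← pow_two, ← pow_add] at htr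
    exact pow_eq_zero_iff (by omega) |>.1 htr
  have : (k : ZMod (n + 2)) = 1 + c * t := by rw [hkc]; push_cast; ring
  rw [← hkcp, hk0, zero_mul, add_zero] at this
  exact zero_ne_one this

/-! ### The graph of parallel classes -/

/-- If some line has only thick points, there are no poles: otherwise the graph of parallel classes
under perpendicularity contradicts `no_regular_friendship`. -/
theorem no_poles {Point Line : Type*} [Fintype Point] [Fintype Line]
    (G : PartialSherkPlane Point Line) {L : Line}
    (hL : ∀ P, G.Inc P L → 3 ≤ #(G.lns P)) (W : Point) (l₀ : Line) : ¬ G.IsPole W l₀ := by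
  classical
  intro hW
  have hth := G.thick hL
  obtain ⟨R, hR⟩ : ∃ R, R = #(G.lns W) := ⟨_, rfl⟩
  obtain ⟨D, hD'⟩ : ∃ D, D = #(G.pts L) := ⟨_, rfl⟩
  have hD : ∀ l, #(G.pts l) = D := fun l => by rw [hD', G.card_pts_const hL]
  have hR' : ∀ P, #(G.lns P) = R := fun P => by rw [hR, G.card_lns_const hth P W]
  have hR3 : 3 ≤ R := hR ▸ hth W
  obtain ⟨q, hq'⟩ : ∃ q, q = #(G.polars W) := ⟨_, rfl⟩
  obtain ⟨c, hc'⟩ : ∃ c, c = #(G.twins L) := ⟨_, rfl⟩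
  have hqW := G.card_lines_add hD W (hR' W) (by omega)
  have hq : ∀ P, #(G.polars P) = q := by
    intro P
    have h1 := G.card_lines_add hD P (hR' P) (by omega)
    have h2 : #(G.polars P) * (R - 1) = #(G.polars W) * (R - 1) := by omega
    rw [hq']
    exact Nat.eq_of_mul_eq_mul_right (by omega) h2
  have hcL := G.card_twins_add hD hR' L
  have hc : ∀ l, #(G.twins l) = c := by
    intro l
    have := G.card_twins_add hD hR' l
    omega
  have hq1 : 1 ≤ q := by
    rw [hq', Nat.succ_le_iff, Finset.card_pos]
    exact ⟨l₀, by simp [hW]⟩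
  have hc1 : 1 ≤ c := by
    rw [hc', Nat.succ_le_iff, Finset.card_pos]
    exact ⟨L, by simp⟩
  have hDc : D = c + q * (R - 1) := by
    rw [← hq'] at hqW
    rw [← hc', mul_comm D R] at hcL
    omega
  have hperp : ∀ a b a' b' : Line, G.twin a a' → G.twin b b' →
      G.Perp a b = G.Perp a' b' := by
    intro a b a' b' ha hb
    refine propext ((hb a).trans ⟨fun h => ?_, fun h => ?_⟩)
    · exact G.b1 _ _ ((ha b').1 (G.b1 _ _ h))
    · exact G.b1 _ _ ((ha b').2 (G.b1 _ _ h))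
  let adj : Quotient G.twin → Quotient G.twin → Prop := Quotient.lift₂ G.Perp hperp
  -- each parallel class consists of `c` lines
  have hfib : ∀ (X : Quotient G.twin → Prop) [DecidablePred X],
      #{k : Line | X (Quotient.mk _ k)} = c * Nat.card {γ // X γ} := by
    intro X _
    rw [Nat.card_eq_fintype_card, Fintype.card_subtype, mul_comm]
    rw [Finset.card_eq_sum_card_fiberwise (f := fun k => (Quotient.mk G.twin k))
      (t := {γ | X γ}) (fun k hk => by simpa using hk), Finset.sum_const_nat]
    intro γ hγ
    induction γ using Quotient.inductionOn with
    | h l =>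
      rw [← hc l]
      congr 1
      ext k
      simp only [mem_filter, mem_univ, true_and, mem_twins] at hγ ⊢
      constructor
      · exact fun h => Quotient.exact h.2
      · exact fun h => ⟨(Quotient.sound h : Quotient.mk G.twin k = _) ▸ hγ, Quotient.sound h⟩
  have hdeg : ∀ α, c * Nat.card {β // adj β α} = D := by
    intro α
    induction α using Quotient.inductionOn with
    | h l =>
      rw [← hfib, ← hD l, ← G.card_perps]
      congr 1
  have hcom : ∀ α β, α ≠ β → c * Nat.card {γ // adj γ α ∧ adj γ β} = q := by
    intro α β hαβ
    induction α using Quotient.inductionOn with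
    | h l =>
      induction β using Quotient.inductionOn with
      | h m =>
        have : ∃ P, G.Inc P m ∧ G.Inc P l := by
          by_contra hno
          exact hαβ (Quotient.sound (G.twin_of_disjoint hno))
        obtain ⟨P, hPm, hPl⟩ := this
        have hlm : l ≠ m := fun h => hαβ (h ▸ rfl)
        rw [← hfib, ← hq P]
        congr 1
        ext k
        rw [mem_polars, ← G.common_perps hlm hPl hPm k, mem_filter]
        exact and_iff_right (mem_univ k)
  -- two meeting lines supply the value of the number of common neighbours
  obtain ⟨x, y, -, hxy, -⟩ := G.b5
  have hne : Quotient.mk G.twin x ≠ Quotient.mk G.twin y := by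
    intro h
    obtain ⟨P, hx, hy⟩ := G.b2 x y hxy
    exact Perp_ne hxy (G.eq_of_twin (Quotient.exact h) hx hy)
  obtain ⟨k, hk⟩ : ∃ k, k = Nat.card {β // adj β (Quotient.mk G.twin x)} := ⟨_, rfl⟩
  obtain ⟨e, he⟩ : ∃ e, e = Nat.card {γ // adj γ (Quotient.mk G.twin x) ∧
      adj γ (Quotient.mk G.twin y)} := ⟨_, rfl⟩
  have hkD : c * k = D := hk ▸ hdeg _
  have heq : c * e = q := he ▸ hcom _ _ hne
  have : Nonempty (Quotient G.twin) := ⟨Quotient.mk _ x⟩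
  refine no_regular_friendship adj (k := k) (c := e) (t := R - 1) ?_ ?_ ?_ ?_ ?_ (by omega) ?_
  · intro α β
    induction α using Quotient.inductionOn with
    | h l =>
      induction β using Quotient.inductionOn with
      | h m => exact G.b1 l m
  · intro α
    induction α using Quotient.inductionOn with
    | h l => exact G.perp_irrefl l
  · exact fun α => Nat.eq_of_mul_eq_mul_left hc1 ((hdeg α).trans hkD.symm)
  · exact fun α β h => Nat.eq_of_mul_eq_mul_left hc1 ((hcom α β h).trans heq.symm)
  · refine Nat.eq_of_mul_eq_mul_left hc1 ?_
    rw [hkD, hDc, ← heq]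
    ring
  · rcases Nat.eq_zero_or_pos e with h | h
    · rw [h, mul_zero] at heq
      omega
    · exact h

end PartialSherkPlane

theorem stmt_18 {Point Line : Type*} [Fintype Point] [Fintype Line]
    (G : PartialSherkPlane Point Line)
    (hthick : ∃ l : Line, ∀ P : Point, G.Inc P l → 3 ≤ Nat.card {m : Line // G.Inc P m}) :
    ∀ (l : Line) (P : Point), ¬ G.Inc P l →
      ∃! m : Line, G.Inc P m ∧ ¬ ∃ Q : Point, G.Inc Q m ∧ G.Inc Q l := by
  classical
  obtain ⟨L, hL⟩ := hthick
  have hL' : ∀ P, G.Inc P L → 3 ≤ (G.lns P).card := by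
    intro P hP
    have := hL P hP
    rwa [Nat.card_eq_fintype_card, Fintype.card_subtype] at this
  exact G.parallel_of_no_poles (G.no_poles hL')
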